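/- In a nilpotent differential graded Lie algebra L, the gauge action of (L_0, *) (with the Baker-Campbell-Hausdorff product) on MC(L) is a group action: 0 ∙ z = z and x ∙ (y ∙ z) = (x * y) ∙ z. -/

import Mathlib

namespace Paper

variable {L : Type*} [AddCommGroup L] [Module ℚ L]

/-- The axioms of a ℤ-graded differential graded Lie algebra over ℚ, on a ℚ-vector space `L`
with grading `deg`, bilinear bracket `bk` and differential `d` of degree `-1`:
graded antisymmetry, graded Jacobi identity, graded Leibniz rule and `d ∘ d = 0`. -/
structure IsDGLA (deg : ℤ → Submodule ℚ L) (bk : L →ₗ[ℚ] L →ₗ[ℚ] L) (d : L →ₗ[ℚ] L) : Prop where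
  bk_deg : ∀ (i j : ℤ) (x y : L), x ∈ deg i → y ∈ deg j → bk x y ∈ deg (i + j)
  antisymm : ∀ (i j : ℤ) (x y : L), x ∈ deg i → y ∈ deg j →
    bk x y = -(((-1 : ℚ) ^ (i * j)) • bk y x)
  jacobi : ∀ (i j : ℤ) (x y z : L), x ∈ deg i → y ∈ deg j →
    bk x (bk y z) = bk (bk x y) z + ((-1 : ℚ) ^ (i * j)) • bk y (bk x z)
  d_deg : ∀ (i : ℤ) (x : L), x ∈ deg i → d x ∈ deg (i - 1)
  leibniz : ∀ (i : ℤ) (x y : L), x ∈ deg i →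
    d (bk x y) = bk (d x) y + ((-1 : ℚ) ^ i) • bk x (d y)
  d_sq : ∀ x : L, d (d x) = 0
  deg_spans : (⨆ i : ℤ, deg i) = ⊤

/-- Iterated adjoint action: `adp bk x n z = ad_x^n (z)`. -/
def adp (bk : L →ₗ[ℚ] L →ₗ[ℚ] L) (x : L) (n : ℕ) (z : L) : L := (fun t => bk x t)^[n] z

/-- A Maurer-Cartan element: `u` of degree `-1` with `d u = -½[u,u]`. -/
def IsMC (deg : ℤ → Submodule ℚ L) (bk : L →ₗ[ℚ] L →ₗ[ℚ] L) (d : L →ₗ[ℚ] L) (u : L) : Prop :=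
  u ∈ deg (-1) ∧ d u = -((1 / 2 : ℚ) • bk u u)

/-- Right-nested iterated bracket of a word with respect to the bilinear bracket `bk`. -/
def wordBk (bk : L →ₗ[ℚ] L →ₗ[ℚ] L) : List L → L
  | [] => 0
  | [a] => a
  | a :: rest => bk a (wordBk bk rest)

/-- Dynkin term of the BCH series with respect to `bk`. -/
def dynkinTermBk (bk : L →ₗ[ℚ] L →ₗ[ℚ] L) (x y : L) (ps : List (ℕ × ℕ)) : L :=
  wordBk bk ((ps.map fun pq => List.replicate pq.1 x ++ List.replicate pq.2 y)).flatten

/-- Dynkin coefficient of the BCH series. -/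
def dynkinCoeff (ps : List (ℕ × ℕ)) : ℚ :=
  if ps.all fun pq => 0 < pq.1 + pq.2 then
    (-1 : ℚ) ^ (ps.length - 1) /
      ((ps.length : ℚ) * (((ps.map fun pq => pq.1 + pq.2).sum : ℕ) : ℚ) *
        (((ps.map fun pq => pq.1.factorial * pq.2.factorial).prod : ℕ) : ℚ))
  else 0

/-- The Baker-Campbell-Hausdorff product (Dynkin's formula), truncated at bracket
length `N`; in a nilpotent algebra where all brackets of length `≥ N` vanish this is
the full BCH product. -/
noncomputable def bch (bk : L →ₗ[ℚ] L →ₗ[ℚ] L) (N : ℕ) (x y : L) : L :=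
  ∑ n ∈ Finset.range N, ∑ f : Fin (n + 1) → Fin (N + 1) × Fin (N + 1),
    dynkinCoeff (List.ofFn fun i => (((f i).1 : ℕ), ((f i).2 : ℕ))) •
      dynkinTermBk bk x y (List.ofFn fun i => (((f i).1 : ℕ), ((f i).2 : ℕ)))

/-- The gauge action `x ∙ z = e^{ad_x}(z) - ((e^{ad_x}-1)/ad_x)(dx)`, a finite sum in a
nilpotent algebra with `ad^N = 0`. -/
noncomputable def gauge (bk : L →ₗ[ℚ] L →ₗ[ℚ] L) (d : L →ₗ[ℚ] L) (N : ℕ) (x z : L) : L :=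
  (∑ n ∈ Finset.range N, ((n.factorial : ℚ)⁻¹) • adp bk x n z) -
    ∑ n ∈ Finset.range N, (((n + 1).factorial : ℚ)⁻¹) • adp bk x n (d x)

section LogExp

open Polynomial

variable {A : Type*} [Ring A] [Algebra ℚ A]

/-- The logarithm series `∑ (-1)^n u^(n+1) / (n+1)`, truncated after `K` terms. -/
noncomputable def logSum (K : ℕ) (u : A) : A :=
  ∑ n ∈ Finset.range K, ((-1 : ℚ) ^ n / (n + 1)) • u ^ (n + 1)

theorem logSum_eq_mul (K : ℕ) (u : A) :
    logSum K u = u * ∑ n ∈ Finset.range K, ((-1 : ℚ) ^ n / (n + 1)) • u ^ n := by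
  simp [logSum, Finset.mul_sum, pow_succ']

theorem commute_logSum {a u : A} (h : Commute a u) (K : ℕ) : Commute a (logSum K u) :=
  Commute.sum_right _ _ _ fun _ _ => (h.pow_right _).smul_right _

theorem isNilpotent_logSum {u : A} (hu : IsNilpotent u) (K : ℕ) : IsNilpotent (logSum K u) := by
  rw [logSum_eq_mul]
  refine Commute.isNilpotent_mul_right ?_ hu
  exact Commute.sum_right _ _ _ fun _ _ => ((Commute.refl u).pow_right _).smul_right _

theorem map_logSum {B : Type*} [Ring B] [Algebra ℚ B] (f : A →ₐ[ℚ] B) (K : ℕ) (u : A) :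
    f (logSum K u) = logSum K (f u) := by
  simp [logSum]

theorem eq_C_of_derivative_eq_zero {B : Type*} [CommRing B] [Algebra ℚ B] {p : B[X]}
    (hp : derivative p = 0) : p = C (p.coeff 0) := by
  ext n
  rcases n with _ | n
  · simp
  · have h : p.coeff (n + 1) * ((n + 1 : ℕ) : B) = 0 := by
      simpa [coeff_derivative] using congrArg (fun q => q.coeff n) hp
    have hu : IsUnit ((n + 1 : ℕ) : B) := by
      have : IsUnit (algebraMap ℚ B ((n + 1 : ℕ) : ℚ)) :=
        (IsUnit.mk0 _ (by positivity)).map _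
      simpa using this
    rw [coeff_C_of_ne_zero (Nat.succ_ne_zero n)]
    exact (hu.mul_left_eq_zero).1 h

theorem derivative_exp {B : Type*} [CommRing B] [Algebra ℚ B] {p : B[X]} (hp : IsNilpotent p) :
    derivative (IsNilpotent.exp p) = derivative p * IsNilpotent.exp p := by
  obtain ⟨k, hk⟩ := hp
  nth_rw 2 [IsNilpotent.exp_eq_sum hk]
  rw [IsNilpotent.exp_eq_sum (pow_eq_zero_of_le k.le_succ hk), Finset.sum_range_succ']
  simp only [derivative_add, derivative_sum, Finset.mul_sum]
  simp only [derivative_smul, derivative_pow, Nat.factorial_zero, pow_zero, derivative_one,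
    smul_zero, add_zero]
  refine Finset.sum_congr rfl fun i _ => ?_
  have h : (((i + 1).factorial : ℚ)⁻¹) * ((i + 1 : ℕ) : ℚ) = ((i.factorial : ℚ)⁻¹) := by
    rw [Nat.factorial_succ]
    push_cast
    field_simp
  rw [← h, mul_smul, mul_smul_comm]
  congr 1
  rw [Nat.cast_smul_eq_nsmul, nsmul_eq_mul]
  simp
  ring

theorem exp_logSum_of_comm {B : Type*} [CommRing B] [Algebra ℚ B] {u : B} {K : ℕ}
    (hu : u ^ K = 0) : IsNilpotent.exp (logSum K u) = 1 + u := by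
  set v : B[X] := C u * X with hv
  have hvK : v ^ K = 0 := by rw [hv, mul_pow, ← C_pow, hu, C_0, zero_mul]
  have hl : IsNilpotent (logSum K v) := isNilpotent_logSum ⟨K, hvK⟩ K
  have hdl : derivative (logSum K v) * (1 + v) = C u := by
    have h1 : derivative (logSum K v) = C u * ∑ n ∈ Finset.range K, (-v) ^ n := by
      simp only [logSum, derivative_sum, Finset.mul_sum]
      refine Finset.sum_congr rfl fun n _ => ?_
      rw [derivative_smul, derivative_pow]
      have hv' : derivative v = C u := by simp [hv]
      have hc : (C ((n + 1 : ℕ) : B) : B[X]) = algebraMap ℚ B[X] ((n : ℚ) + 1) := by simp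
      rw [hv', hc, Algebra.smul_def, ← mul_assoc, ← mul_assoc, ← map_mul,
        div_mul_cancel₀ _ (by positivity), neg_pow v]
      simp
      ring
    have h2 := mul_neg_geom_sum (-v) K
    rw [neg_pow, hvK, mul_zero, sub_zero, sub_neg_eq_add] at h2
    rw [h1, mul_assoc, mul_comm _ (1 + v), h2, mul_one]
  set F := IsNilpotent.exp (-logSum K v) * (1 + v) with hF
  have hF' : derivative F = 0 := by
    rw [hF, derivative_mul, derivative_exp hl.neg]
    have hv' : derivative v = C u := by simp [hv]
    simp only [derivative_neg, derivative_add, derivative_one, zero_add, hv']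
    rw [← hdl]
    ring
  have hF0 : F.coeff 0 = 1 := by
    rw [coeff_zero_eq_eval_zero, hF, eval_mul]
    have h1 : (IsNilpotent.exp (-logSum K v)).eval 0 = 1 := by
      change (aeval (0 : B) : B[X] →ₐ[B] B) _ = 1
      rw [IsNilpotent.map_exp hl.neg, map_neg]
      have := map_logSum ((aeval (0 : B) : B[X] →ₐ[B] B).restrictScalars ℚ) K v
      rw [AlgHom.restrictScalars_apply] at this
      rw [this]
      simp [hv, logSum]
    rw [h1, one_mul, hv]
    simp
  have h3 : IsNilpotent.exp (logSum K v) = 1 + v := by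
    have h4 : F = 1 := by rw [eq_C_of_derivative_eq_zero hF', hF0, C_1]
    calc _ = IsNilpotent.exp (logSum K v) * F := by rw [h4, mul_one]
      _ = 1 + v := by rw [hF, ← mul_assoc, IsNilpotent.exp_mul_exp_neg_self hl, one_mul]
  have h5 := congrArg ((aeval (1 : B) : B[X] →ₐ[B] B).restrictScalars ℚ) h3
  rw [IsNilpotent.map_exp hl, map_logSum] at h5
  simpa [hv] using h5

theorem exp_logSum {u : A} {K : ℕ} (hu : u ^ K = 0) :
    IsNilpotent.exp (logSum K u) = 1 + u := by
  let I : Ideal ℚ[X] := Ideal.span {X ^ K}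
  have hI : ∀ p ∈ I, aeval u p = 0 := by
    intro p hp
    obtain ⟨q, rfl⟩ := Ideal.mem_span_singleton'.1 hp
    simp [hu]
  let f : ℚ[X] ⧸ I →ₐ[ℚ] A := Ideal.Quotient.liftₐ I (aeval u) hI
  let v : ℚ[X] ⧸ I := Ideal.Quotient.mk I X
  have hfv : f v = u := by
    change aeval u (X : ℚ[X]) = u
    simp
  have hv : v ^ K = 0 := by
    rw [← map_pow]
    exact Ideal.Quotient.eq_zero_iff_mem.2 (Ideal.mem_span_singleton_self _)
  have h := congrArg f (exp_logSum_of_comm hv)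
  rwa [IsNilpotent.map_exp (isNilpotent_logSum ⟨K, hv⟩ K), map_logSum, map_add, map_one, hfv] at h

theorem eq_zero_of_exp_eq_one {c : A} (hc : IsNilpotent c) (h : IsNilpotent.exp c = 1) :
    c = 0 := by
  obtain ⟨k, hk⟩ := hc
  rw [IsNilpotent.exp_eq_sum (k := k + 2) (pow_eq_zero_of_le (by omega) hk),
    Finset.sum_range_succ', Finset.sum_range_succ'] at h
  set r := ∑ i ∈ Finset.range k, (((i + 1 + 1).factorial : ℚ)⁻¹) • c ^ i with hr
  have h2 : ∑ i ∈ Finset.range k, (((i + 1 + 1).factorial : ℚ)⁻¹) • c ^ (i + 1 + 1) =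
      c * (c * r) := by
    simp [hr, Finset.mul_sum, pow_succ']
  have hcr : Commute c r :=
    Commute.sum_right _ _ _ fun _ _ => ((Commute.refl c).pow_right _).smul_right _
  have hnil : IsNilpotent (c * r) := hcr.isNilpotent_mul_right ⟨k, hk⟩
  have h3 : c * (c * r + 1) = 0 := by
    rw [h2] at h
    simp only [zero_add, Nat.factorial_one, Nat.factorial_zero, pow_one, pow_zero, Nat.cast_one,
      inv_one, one_smul, add_eq_right] at h
    rw [mul_add, mul_one, h]
  exact (hnil.isUnit_add_one.mul_left_eq_zero).1 h3

theorem logSum_exp_sub_one {w : A} (hw : IsNilpotent w) {K : ℕ}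
    (hK : (IsNilpotent.exp w - 1) ^ K = 0) : logSum K (IsNilpotent.exp w - 1) = w := by
  set l := logSum K (IsNilpotent.exp w - 1)
  have hl : IsNilpotent l := isNilpotent_logSum ⟨K, hK⟩ K
  have hwexp : Commute w (IsNilpotent.exp w) :=
    Commute.sum_right _ _ _ fun _ _ => ((Commute.refl w).pow_right _).smul_right _
  have hwl : Commute w l := commute_logSum (hwexp.sub_right (Commute.one_right w)) K
  have hexp : IsNilpotent.exp l = IsNilpotent.exp w := by rw [exp_logSum hK]; abel
  have h : l + -w = 0 := by
    apply eq_zero_of_exp_eq_one (hwl.symm.neg_right.isNilpotent_add hl hw.neg)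
    rw [IsNilpotent.exp_add_of_commute hwl.symm.neg_right hl hw.neg, hexp,
      IsNilpotent.exp_mul_exp_neg_self hw]
  exact add_neg_eq_zero.1 h

end LogExp

section Commutator

variable {A : Type*} [Ring A] [Algebra ℚ A]

/-- The commutator bracket of an associative algebra. -/
noncomputable def commBk (A : Type*) [Ring A] [Algebra ℚ A] : A →ₗ[ℚ] A →ₗ[ℚ] A :=
  LinearMap.mul ℚ A - (LinearMap.mul ℚ A).flip

@[simp]
theorem commBk_apply (a b : A) : commBk A a b = a * b - b * a := rfl

theorem commBk_eq (a : A) : commBk A a = LinearMap.mulLeft ℚ a + LinearMap.mulRight ℚ (-a) := by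
  ext b
  simp [sub_eq_add_neg]

theorem isNilpotent_commBk {a : A} (ha : IsNilpotent a) :
    IsNilpotent (commBk A a : Module.End ℚ A) := by
  rw [commBk_eq]
  refine (LinearMap.commute_mulLeft_right (R := ℚ) a (-a)).isNilpotent_add ?_ ?_
  · exact (LinearMap.isNilpotent_mulLeft_iff ℚ a).2 ha
  · exact (LinearMap.isNilpotent_mulRight_iff ℚ (-a)).2 ha.neg

theorem exp_commBk {a : A} (ha : IsNilpotent a) (b : A) :
    IsNilpotent.exp (commBk A a : Module.End ℚ A) b =
      IsNilpotent.exp a * b * IsNilpotent.exp (-a) := by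
  have h1 : IsNilpotent.exp (LinearMap.mulLeft ℚ a) =
      LinearMap.mulLeft ℚ (IsNilpotent.exp a) :=
    (IsNilpotent.map_exp ha (Algebra.lmul ℚ A)).symm
  have h2 : IsNilpotent.exp (LinearMap.mulRight ℚ (-a)) =
      LinearMap.mulRight ℚ (IsNilpotent.exp (-a)) := by
    obtain ⟨k, hk⟩ := ha.neg
    rw [IsNilpotent.exp_eq_sum hk, IsNilpotent.exp_eq_sum (k := k)]
    · ext b
      simp [LinearMap.sum_apply, Finset.mul_sum, LinearMap.pow_mulRight]
    · rw [LinearMap.pow_mulRight, hk]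
      simp
  rw [commBk_eq, IsNilpotent.exp_add_of_commute (LinearMap.commute_mulLeft_right (R := ℚ) a (-a))
    ((LinearMap.isNilpotent_mulLeft_iff ℚ a).2 ha)
    ((LinearMap.isNilpotent_mulRight_iff ℚ (-a)).2 ha.neg), h1, h2]
  simp [mul_assoc]

/-- The adjoint action intertwines the logarithm of a product of exponentials in an algebra
with the one in its algebra of endomorphisms. -/
theorem commBk_logSum_exp_mul_exp {x y : A} (hx : IsNilpotent x) (hy : IsNilpotent y) {N : ℕ}
    (hN : (IsNilpotent.exp x * IsNilpotent.exp y - 1) ^ N = 0) :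
    ∃ M, ∀ K, M ≤ K → commBk A (logSum N (IsNilpotent.exp x * IsNilpotent.exp y - 1)) =
      logSum K (IsNilpotent.exp (commBk A x : Module.End ℚ A) *
        IsNilpotent.exp (commBk A y : Module.End ℚ A) - 1) := by
  set z := logSum N (IsNilpotent.exp x * IsNilpotent.exp y - 1)
  have hz : IsNilpotent z := isNilpotent_logSum ⟨N, hN⟩ N
  have hexp : IsNilpotent.exp z = IsNilpotent.exp x * IsNilpotent.exp y := by
    rw [exp_logSum hN]; abel
  have hexpneg : IsNilpotent.exp (-z) = IsNilpotent.exp (-y) * IsNilpotent.exp (-x) := by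
    refine left_inv_eq_right_inv (a := IsNilpotent.exp z) (IsNilpotent.exp_neg_mul_exp_self hz) ?_
    rw [hexp, mul_assoc, ← mul_assoc _ _ (IsNilpotent.exp (-x)),
      IsNilpotent.exp_mul_exp_neg_self hy, one_mul, IsNilpotent.exp_mul_exp_neg_self hx]
  have hG : IsNilpotent.exp (commBk A z : Module.End ℚ A) =
      IsNilpotent.exp (commBk A x : Module.End ℚ A) *
        IsNilpotent.exp (commBk A y : Module.End ℚ A) := by
    ext b
    simp only [Module.End.mul_apply, exp_commBk hx, exp_commBk hy, exp_commBk hz, hexp, hexpneg,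
      mul_assoc]
  have hz' := isNilpotent_commBk hz
  obtain ⟨M, hM⟩ := IsNilpotent.isNilpotent_exp_sub_one hz'
  refine ⟨M, fun K hK => ?_⟩
  rw [← hG, logSum_exp_sub_one hz' (pow_eq_zero_of_le hK hM)]

end Commutator

section WordBracket

variable {L : Type*} [AddCommGroup L] [Module ℚ L] (bk : L →ₗ[ℚ] L →ₗ[ℚ] L)

theorem wordBk_cons {l : List L} (hl : l ≠ []) (a : L) :
    wordBk bk (a :: l) = bk a (wordBk bk l) := by
  cases l with
  | nil => exact absurd rfl hl
  | cons b l => rfl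

theorem wordBk_replicate_append {l : List L} (hl : l ≠ []) (a : L) (p : ℕ) :
    wordBk bk (List.replicate p a ++ l) = ((bk a : Module.End ℚ L) ^ p) (wordBk bk l) := by
  induction p with
  | zero => simp
  | succ p ih =>
    rw [List.replicate_succ, List.cons_append, wordBk_cons bk (by simp [hl]), ih, pow_succ',
      Module.End.mul_apply]

theorem wordBk_replicate (hbk : ∀ a, bk a a = 0) (a : L) (p : ℕ) :
    wordBk bk (List.replicate p a) = if p = 1 then a else 0 := by
  rcases p with _ | _ | p
  · rfl
  · rfl
  · have h : List.replicate (p + 1 + 1) a = List.replicate p a ++ [a, a] := by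
      rw [List.replicate_add, List.replicate_add, List.append_assoc]; rfl
    rw [h, wordBk_replicate_append bk (by simp)]
    simp [wordBk, hbk]

end WordBracket

section BlockExpansion

open scoped Nat

/-- The coefficient of `x ^ p * y ^ q` in `exp x * exp y - 1`. -/
def blockCoeff (pq : ℕ × ℕ) : ℚ :=
  if 0 < pq.1 + pq.2 then ((pq.1 ! * pq.2 ! : ℕ) : ℚ)⁻¹ else 0

/-- Truncation of the expansion of `exp x * exp y - 1`. -/
noncomputable def blockSum {A : Type*} [Ring A] [Algebra ℚ A] (N : ℕ) (x y : A) : A :=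
  ∑ a : Fin (N + 1) × Fin (N + 1),
    blockCoeff ((a.1 : ℕ), (a.2 : ℕ)) • (x ^ (a.1 : ℕ) * y ^ (a.2 : ℕ))

theorem truncExp_mul_truncExp_sub_one {A : Type*} [Ring A] [Algebra ℚ A] (N : ℕ) (x y : A) :
    (∑ p ∈ Finset.range (N + 1), (p ! : ℚ)⁻¹ • x ^ p) *
      (∑ q ∈ Finset.range (N + 1), (q ! : ℚ)⁻¹ • y ^ q) - 1 = blockSum N x y := by
  have h (a : Fin (N + 1) × Fin (N + 1)) :
      ((a.1 : ℕ) ! : ℚ)⁻¹ • x ^ (a.1 : ℕ) * ((a.2 : ℕ) ! : ℚ)⁻¹ • y ^ (a.2 : ℕ) =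
        blockCoeff ((a.1 : ℕ), (a.2 : ℕ)) • (x ^ (a.1 : ℕ) * y ^ (a.2 : ℕ)) +
          if a = 0 then 1 else 0 := by
    by_cases ha : a = 0
    · simp [ha, blockCoeff]
    · have hpos : 0 < (a.1 : ℕ) + (a.2 : ℕ) := by
        by_contra hcon
        exact ha (Prod.ext (Fin.val_eq_zero_iff.1 (by omega))
          (Fin.val_eq_zero_iff.1 (by omega)))
      rw [smul_mul_smul_comm]
      simp [ha, blockCoeff, hpos, mul_comm]
  rw [← Fin.sum_univ_eq_sum_range (fun p => (p ! : ℚ)⁻¹ • x ^ p),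
    ← Fin.sum_univ_eq_sum_range (fun p => (p ! : ℚ)⁻¹ • y ^ p), Finset.sum_mul_sum,
    ← Fintype.sum_prod_type', Finset.sum_congr rfl fun a _ => h a, Finset.sum_add_distrib]
  simp [blockSum]

theorem sum_ofFn_succ {ι M : Type*} [Fintype ι] [AddCommMonoid M] (n : ℕ) (F : List ι → M) :
    ∑ f : Fin (n + 1) → ι, F (List.ofFn f) =
      ∑ a : ι, ∑ f : Fin n → ι, F (a :: List.ofFn f) := by
  rw [← Fintype.sum_prod_type', ← (Fin.consEquiv fun _ => ι).sum_comp]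
  refine Finset.sum_congr rfl fun a _ => ?_
  simp [Fin.consEquiv, List.ofFn_succ]

variable {L : Type*} [AddCommGroup L] [Module ℚ L] (bk : L →ₗ[ℚ] L →ₗ[ℚ] L)

theorem prod_blockCoeff_smul_dynkinTermBk_cons (x y : L) (pq : ℕ × ℕ) {ps : List (ℕ × ℕ)}
    (hps : ps ≠ []) :
    ((pq :: ps).map blockCoeff).prod • dynkinTermBk bk x y (pq :: ps) =
      blockCoeff pq • ((bk x : Module.End ℚ L) ^ pq.1 * (bk y : Module.End ℚ L) ^ pq.2)
        ((ps.map blockCoeff).prod • dynkinTermBk bk x y ps) := by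
  rw [List.map_cons, List.prod_cons, mul_smul, map_smul]
  obtain ⟨a, l, rfl⟩ := List.exists_cons_of_ne_nil hps
  by_cases ha : 0 < a.1 + a.2
  · have hne : List.replicate a.1 x ++ (List.replicate a.2 y ++
        (l.map fun pq => List.replicate pq.1 x ++ List.replicate pq.2 y).flatten) ≠ [] := by
      intro h
      have := congrArg List.length h
      simp at this
      omega
    simp only [dynkinTermBk, List.map_cons, List.flatten_cons, List.append_assoc]
    rw [wordBk_replicate_append bk (by simpa using fun _ => hne),
      wordBk_replicate_append bk hne, Module.End.mul_apply]
  · simp [blockCoeff, ha]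

theorem blockSum_pow_apply (N n : ℕ) (x y : L) :
    (blockSum N (bk x : Module.End ℚ L) (bk y) ^ n)
      (∑ a : Fin (N + 1) × Fin (N + 1), blockCoeff ((a.1 : ℕ), (a.2 : ℕ)) •
        wordBk bk (List.replicate (a.1 : ℕ) x ++ List.replicate (a.2 : ℕ) y)) =
    ∑ f : Fin (n + 1) → Fin (N + 1) × Fin (N + 1),
      ((List.ofFn fun i => (((f i).1 : ℕ), ((f i).2 : ℕ))).map blockCoeff).prod •
        dynkinTermBk bk x y (List.ofFn fun i => (((f i).1 : ℕ), ((f i).2 : ℕ))) := by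
  set c : Fin (N + 1) × Fin (N + 1) → ℕ × ℕ := fun a => ((a.1 : ℕ), (a.2 : ℕ)) with hc
  set F : List (Fin (N + 1) × Fin (N + 1)) → L := fun l =>
    ((l.map c).map blockCoeff).prod • dynkinTermBk bk x y (l.map c) with hF
  have hsum (m : ℕ) (f : Fin m → Fin (N + 1) × Fin (N + 1)) :
      ((List.ofFn fun i => (((f i).1 : ℕ), ((f i).2 : ℕ))).map blockCoeff).prod •
        dynkinTermBk bk x y (List.ofFn fun i => (((f i).1 : ℕ), ((f i).2 : ℕ))) =
      F (List.ofFn f) := by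
    simp only [hF, List.map_ofFn]
    rfl
  simp only [hsum]
  induction n with
  | zero =>
    rw [sum_ofFn_succ]
    simp [hF, hc, dynkinTermBk]
  | succ n ih =>
    rw [pow_succ', Module.End.mul_apply, ih, sum_ofFn_succ (n + 1) F, blockSum, LinearMap.sum_apply]
    refine Finset.sum_congr rfl fun a _ => ?_
    rw [LinearMap.smul_apply, map_sum, Finset.smul_sum]
    refine Finset.sum_congr rfl fun f _ => ?_
    have hne : (List.ofFn f).map c ≠ [] := by simp [List.ofFn_succ]
    exact (prod_blockCoeff_smul_dynkinTermBk_cons bk x y (c a) hne).symm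

theorem prod_map_blockCoeff (ps : List (ℕ × ℕ)) :
    (ps.map blockCoeff).prod = if ps.all fun pq => 0 < pq.1 + pq.2 then
      (((ps.map fun pq => pq.1 ! * pq.2 !).prod : ℕ) : ℚ)⁻¹ else 0 := by
  induction ps with
  | nil => simp
  | cons a ps ih =>
    rw [List.map_cons, List.prod_cons, ih, List.all_cons]
    by_cases ha : 0 < a.1 + a.2
    · by_cases hps : ps.all fun pq => 0 < pq.1 + pq.2
      · simp only [ha, hps, decide_true, Bool.and_self, if_true, blockCoeff, List.map_cons,
          List.prod_cons]
        rw [← mul_inv, ← Nat.cast_mul]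
      · rw [if_neg hps, if_neg (by simpa using fun _ => by simpa using hps), mul_zero]
    · simp [ha, blockCoeff]

theorem dynkinCoeff_mul_sum {ps : List (ℕ × ℕ)} (hps : ps ≠ []) :
    dynkinCoeff ps * (((ps.map fun pq => pq.1 + pq.2).sum : ℕ) : ℚ) =
      (-1) ^ (ps.length - 1) / (ps.length : ℚ) * (ps.map blockCoeff).prod := by
  rw [prod_map_blockCoeff, dynkinCoeff]
  split_ifs with h
  · have hpos : 0 < (ps.map fun pq => pq.1 + pq.2).sum := by
      obtain ⟨a, l, rfl⟩ := List.exists_cons_of_ne_nil hps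
      simp only [List.all_cons, Bool.and_eq_true, decide_eq_true_eq] at h
      simp only [List.map_cons, List.sum_cons]
      omega
    have hpos' : (((ps.map fun pq => pq.1 + pq.2).sum : ℕ) : ℚ) ≠ 0 := by exact_mod_cast hpos.ne'
    set s := (((ps.map fun pq => pq.1 + pq.2).sum : ℕ) : ℚ)
    rw [div_mul_eq_mul_div, mul_comm ((ps.length : ℚ) * s), div_eq_mul_inv, div_eq_mul_inv]
    simp only [mul_inv]
    field_simp
  · simp

theorem sum_blockCoeff_smul_wordBk (hbk : ∀ a, bk a a = 0) {N : ℕ} (hN : 0 < N) (x y : L) :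
    ∑ a : Fin (N + 1) × Fin (N + 1), blockCoeff ((a.1 : ℕ), (a.2 : ℕ)) •
        wordBk bk (List.replicate (a.1 : ℕ) x ++ List.replicate (a.2 : ℕ) y) =
      x + ∑ p ∈ Finset.range (N + 1), (p ! : ℚ)⁻¹ • ((bk x : Module.End ℚ L) ^ p) y := by
  obtain ⟨M, rfl⟩ : ∃ M, N = M + 1 := ⟨N - 1, by omega⟩
  set T : ℕ → ℕ → L := fun p q =>
    blockCoeff (p, q) • wordBk bk (List.replicate p x ++ List.replicate q y) with hT
  have hT0 (p : ℕ) : T p 0 = if p = 1 then x else 0 := by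
    simp only [hT, List.replicate_zero, List.append_nil, wordBk_replicate bk hbk]
    split_ifs with h
    · simp [h, blockCoeff]
    · simp
  have hT1 (p : ℕ) : T p 1 = (p ! : ℚ)⁻¹ • ((bk x : Module.End ℚ L) ^ p) y := by
    simp only [hT]
    rw [wordBk_replicate_append bk (by simp)]
    simp [blockCoeff, wordBk]
  have hT2 (p q : ℕ) : T p (q + 1 + 1) = 0 := by
    simp only [hT]
    rw [wordBk_replicate_append bk (by simp), wordBk_replicate bk hbk]
    simp
  have hrow (p : ℕ) : ∑ q ∈ Finset.range (M + 1 + 1), T p q =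
      (if p = 1 then x else 0) + (p ! : ℚ)⁻¹ • ((bk x : Module.End ℚ L) ^ p) y := by
    rw [Finset.sum_range_succ', Finset.sum_range_succ', hT0, zero_add, hT1,
      Finset.sum_eq_zero fun q _ => hT2 p q, zero_add, add_comm]
  calc _ = ∑ p : Fin (M + 1 + 1), ∑ q : Fin (M + 1 + 1), T p q := Fintype.sum_prod_type _
    _ = ∑ p ∈ Finset.range (M + 1 + 1), ∑ q ∈ Finset.range (M + 1 + 1), T p q := by
      rw [← Fin.sum_univ_eq_sum_range (fun p => ∑ q ∈ Finset.range (M + 1 + 1), T p q)]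
      simp only [← Fin.sum_univ_eq_sum_range (T _)]
    _ = _ := by
      simp only [hrow, Finset.sum_add_distrib]
      congr 1
      simp

end BlockExpansion

section Filtration

variable {A : Type*} [Ring A] [Algebra ℚ A]

/-- The elements that behave like words of length at least `k` in the letters `S`, in so far as
they are killed by multiplication with enough letters for the total length to reach `N`. -/
def wordFiltration (S : Set A) (N k : ℕ) : Submodule ℚ A where
  carrier := {a | ∀ l₁ l₂ : List A, (∀ c ∈ l₁, c ∈ S) → (∀ c ∈ l₂, c ∈ S) →
    N ≤ l₁.length + l₂.length + k → l₁.prod * a * l₂.prod = 0}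
  zero_mem' := fun _ _ _ _ _ => by simp
  add_mem' := fun ha hb l₁ l₂ h₁ h₂ h => by
    rw [mul_add, add_mul, ha l₁ l₂ h₁ h₂ h, hb l₁ l₂ h₁ h₂ h, add_zero]
  smul_mem' := fun r a ha l₁ l₂ h₁ h₂ h => by
    rw [mul_smul_comm, smul_mul_assoc, ha l₁ l₂ h₁ h₂ h, smul_zero]

variable {S : Set A} {N : ℕ}

theorem wordFiltration_anti {j k : ℕ} (h : j ≤ k) :
    wordFiltration S N k ≤ wordFiltration S N j :=
  fun _ ha l₁ l₂ h₁ h₂ hN => ha l₁ l₂ h₁ h₂ (by omega)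

theorem eq_zero_of_mem_wordFiltration {k : ℕ} (hk : N ≤ k) {a : A}
    (ha : a ∈ wordFiltration S N k) : a = 0 := by
  simpa using ha [] [] (by simp) (by simp) (by simpa using hk)

theorem mul_mem_wordFiltration {k : ℕ} {c a : A} (hc : c ∈ S) (ha : a ∈ wordFiltration S N k) :
    c * a ∈ wordFiltration S N (k + 1) := by
  intro l₁ l₂ h₁ h₂ hN
  have := ha (l₁ ++ [c]) l₂ (by simpa [or_imp, forall_and] using ⟨h₁, hc⟩) h₂
    (by simp; omega)
  simpa [mul_assoc] using this

theorem mul_mem_wordFiltration' {k : ℕ} {c a : A} (hc : c ∈ S) (ha : a ∈ wordFiltration S N k) :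
    a * c ∈ wordFiltration S N (k + 1) := by
  intro l₁ l₂ h₁ h₂ hN
  have := ha l₁ (c :: l₂) h₁ (by simpa using ⟨hc, h₂⟩) (by simp; omega)
  simpa [mul_assoc] using this

theorem commBk_mem_wordFiltration {k : ℕ} {c a : A} (hc : c ∈ S)
    (ha : a ∈ wordFiltration S N k) : commBk A c a ∈ wordFiltration S N (k + 1) :=
  Submodule.sub_mem _ (mul_mem_wordFiltration hc ha) (mul_mem_wordFiltration' hc ha)

theorem one_mem_wordFiltration
    (hnil : ∀ l : List A, (∀ c ∈ l, c ∈ S) → N ≤ l.length → l.prod = 0) :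
    1 ∈ wordFiltration S N 0 := by
  intro l₁ l₂ h₁ h₂ hN
  have := hnil (l₁ ++ l₂) (by simpa [or_imp, forall_and] using ⟨h₁, h₂⟩) (by simpa using hN)
  simpa using this

theorem pow_apply_mem_wordFiltration {T : Module.End ℚ A}
    (hT : ∀ k, ∀ a ∈ wordFiltration S N k, T a ∈ wordFiltration S N (k + 1)) (p : ℕ) {k : ℕ}
    {a : A} (ha : a ∈ wordFiltration S N k) : (T ^ p) a ∈ wordFiltration S N (k + p) := by
  induction p with
  | zero => simpa using ha
  | succ p ih =>
    rw [pow_succ', Module.End.mul_apply]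
    exact hT _ _ ih

theorem blockSum_apply_mem_wordFiltration {T U : Module.End ℚ A}
    (hT : ∀ k, ∀ a ∈ wordFiltration S N k, T a ∈ wordFiltration S N (k + 1))
    (hU : ∀ k, ∀ a ∈ wordFiltration S N k, U a ∈ wordFiltration S N (k + 1)) (M k : ℕ)
    (a : A) (ha : a ∈ wordFiltration S N k) : blockSum M T U a ∈ wordFiltration S N (k + 1) := by
  rw [blockSum, LinearMap.sum_apply]
  refine Submodule.sum_mem _ fun b _ => ?_
  by_cases hb : 0 < (b.1 : ℕ) + (b.2 : ℕ)
  · refine Submodule.smul_mem _ _ (wordFiltration_anti (k := k + b.2 + b.1) (by omega) ?_)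
    exact pow_apply_mem_wordFiltration hT _ (pow_apply_mem_wordFiltration hU _ ha)
  · simp [blockCoeff, hb]

end Filtration

section BCH

open scoped Nat

variable {A : Type*} [Ring A] [Algebra ℚ A] {x y e : A} {N : ℕ}

theorem exp_mul_exp_sub_one (hx : x ^ N = 0) (hy : y ^ N = 0) :
    IsNilpotent.exp x * IsNilpotent.exp y - 1 = blockSum N x y := by
  rw [IsNilpotent.exp_eq_sum (pow_eq_zero_of_le N.le_succ hx),
    IsNilpotent.exp_eq_sum (pow_eq_zero_of_le N.le_succ hy), truncExp_mul_truncExp_sub_one]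

theorem blockSum_pow_eq_zero
    (hnil : ∀ l : List A, (∀ c ∈ l, c ∈ ({x, y} : Set A)) → N ≤ l.length → l.prod = 0) :
    blockSum N x y ^ N = 0 := by
  have hL : ∀ c ∈ ({x, y} : Set A), ∀ k, ∀ a ∈ wordFiltration {x, y} N k,
      LinearMap.mulLeft ℚ c a ∈ wordFiltration {x, y} N (k + 1) :=
    fun c hc k a ha => mul_mem_wordFiltration hc ha
  have h := pow_apply_mem_wordFiltration (blockSum_apply_mem_wordFiltration
    (hL x (by simp)) (hL y (by simp)) N) N (one_mem_wordFiltration hnil)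
  have hmap : blockSum N (LinearMap.mulLeft ℚ x) (LinearMap.mulLeft ℚ y) =
      LinearMap.mulLeft ℚ (blockSum N x y) := by
    have (a : A) : LinearMap.mulLeft ℚ a = Algebra.lmul ℚ A a := rfl
    simp only [this, blockSum, map_sum, map_smul, map_mul, map_pow]
  rw [hmap, LinearMap.pow_mulLeft] at h
  simpa using eq_zero_of_mem_wordFiltration (by omega) h

theorem exp_commBk_of_mem_wordFiltration {S : Set A} {c : A} (hc : c ∈ S) (hnil : IsNilpotent c)
    {k : ℕ} {a : A} (ha : a ∈ wordFiltration S N k) :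
    IsNilpotent.exp (commBk A c : Module.End ℚ A) a =
      ∑ p ∈ Finset.range (N + 1), (p ! : ℚ)⁻¹ • ((commBk A c : Module.End ℚ A) ^ p) a := by
  refine IsNilpotent.exp_smul_eq_sum (m := a) (k := N + 1) ?_ (isNilpotent_commBk hnil)
  exact eq_zero_of_mem_wordFiltration (by omega) (pow_apply_mem_wordFiltration
    (fun k a ha => commBk_mem_wordFiltration hc ha) (N + 1) ha)

theorem exp_commBk_mul_exp_commBk_sub_one (hx : IsNilpotent x) (hy : IsNilpotent y) {k : ℕ}
    {a : A} (ha : a ∈ wordFiltration {x, y} N k) :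
    (IsNilpotent.exp (commBk A x : Module.End ℚ A) *
        IsNilpotent.exp (commBk A y : Module.End ℚ A) - 1) a =
      blockSum N (commBk A x : Module.End ℚ A) (commBk A y) a := by
  have hb : IsNilpotent.exp (commBk A y : Module.End ℚ A) a ∈ wordFiltration {x, y} N k := by
    rw [exp_commBk_of_mem_wordFiltration (by simp) hy ha]
    refine Submodule.sum_mem _ fun p _ => Submodule.smul_mem _ _ ?_
    exact wordFiltration_anti (by omega) (pow_apply_mem_wordFiltration
      (fun k a ha => commBk_mem_wordFiltration (by simp) ha) p ha)
  rw [← truncExp_mul_truncExp_sub_one]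
  simp only [LinearMap.sub_apply, Module.End.mul_apply]
  rw [exp_commBk_of_mem_wordFiltration (by simp) hx hb,
    exp_commBk_of_mem_wordFiltration (by simp) hy ha]
  simp only [LinearMap.sum_apply, LinearMap.smul_apply]

theorem blockSum_commBk_apply_mem {k : ℕ} {a : A} (ha : a ∈ wordFiltration {x, y} N k) :
    blockSum N (commBk A x : Module.End ℚ A) (commBk A y) a ∈
      wordFiltration {x, y} N (k + 1) :=
  blockSum_apply_mem_wordFiltration (fun _ _ h => commBk_mem_wordFiltration (by simp) h)
    (fun _ _ h => commBk_mem_wordFiltration (by simp) h) N k a ha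

theorem exp_commBk_mul_exp_commBk_sub_one_pow (hx : IsNilpotent x) (hy : IsNilpotent y) {k : ℕ}
    {a : A} (ha : a ∈ wordFiltration {x, y} N k) (n : ℕ) :
    ((IsNilpotent.exp (commBk A x : Module.End ℚ A) *
        IsNilpotent.exp (commBk A y : Module.End ℚ A) - 1) ^ n) a =
      (blockSum N (commBk A x : Module.End ℚ A) (commBk A y) ^ n) a := by
  induction n with
  | zero => simp
  | succ n ih =>
    rw [pow_succ', Module.End.mul_apply, ih, pow_succ', Module.End.mul_apply]
    exact exp_commBk_mul_exp_commBk_sub_one hx hy (pow_apply_mem_wordFiltration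
      (fun _ _ h => blockSum_commBk_apply_mem h) n ha)

theorem commBk_mul_of_eigen {a b : A} {r s : ℚ} (ha : commBk A e a = r • a)
    (hb : commBk A e b = s • b) : commBk A e (a * b) = (r + s) • (a * b) := by
  have h : commBk A e (a * b) = commBk A e a * b + a * commBk A e b := by
    simp only [commBk_apply]; noncomm_ring
  rw [h, ha, hb, smul_mul_assoc, mul_smul_comm, add_smul]

theorem commBk_wordBk {l : List A} (hl : ∀ a ∈ l, commBk A e a = a) :
    commBk A e (wordBk (commBk A) l) = (l.length : ℚ) • wordBk (commBk A) l := by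
  induction l with
  | nil => simp [wordBk]
  | cons a l ih =>
    rcases eq_or_ne l [] with rfl | hne
    · simpa [wordBk] using hl a (by simp)
    · rw [wordBk_cons _ hne]
      have ha : commBk A e a = (1 : ℚ) • a := by rw [one_smul]; exact hl a (by simp)
      have hw := ih fun b hb => hl b (by simp [hb])
      rw [commBk_apply a, map_sub, commBk_mul_of_eigen ha hw, commBk_mul_of_eigen hw ha,
        add_comm _ (1 : ℚ), ← smul_sub, List.length_cons, add_comm]
      push_cast
      rfl

theorem commBk_dynkinTermBk (hx : commBk A e x = x) (hy : commBk A e y = y)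
    (ps : List (ℕ × ℕ)) :
    commBk A e (dynkinTermBk (commBk A) x y ps) =
      (((ps.map fun pq => pq.1 + pq.2).sum : ℕ) : ℚ) • dynkinTermBk (commBk A) x y ps := by
  rw [dynkinTermBk, commBk_wordBk]
  · simp [List.length_flatten, Function.comp_def]
  · intro a ha
    simp only [List.mem_flatten, List.mem_map] at ha
    obtain ⟨_, ⟨pq, -, rfl⟩, ha⟩ := ha
    rcases List.mem_append.1 ha with h | h
    · rw [List.eq_of_mem_replicate h, hx]
    · rw [List.eq_of_mem_replicate h, hy]

/-- The elements of positive weight for the bracket with `e`. -/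
def positivePart (e : A) : Submodule ℚ A :=
  Submodule.span ℚ {a | ∃ m : ℕ, commBk A e a = ((m : ℚ) + 1) • a}

theorem mul_mem_positivePart {a b : A} (ha : a ∈ positivePart e) (hb : b ∈ positivePart e) :
    a * b ∈ positivePart e := by
  have h := Submodule.mul_mem_mul ha hb
  rw [positivePart, Submodule.span_mul_span] at h
  refine Submodule.span_mono ?_ h
  rintro _ ⟨a, ⟨m, hm⟩, b, ⟨n, hn⟩, rfl⟩
  refine ⟨m + n + 1, ?_⟩
  rw [commBk_mul_of_eigen hm hn]
  congr 1
  push_cast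
  ring

theorem pow_succ_mem_positivePart {a : A} (ha : a ∈ positivePart e) (n : ℕ) :
    a ^ (n + 1) ∈ positivePart e := by
  induction n with
  | zero => simpa using ha
  | succ n ih => rw [pow_succ]; exact mul_mem_positivePart ih ha

theorem eq_zero_of_mem_positivePart {a : A} (ha : a ∈ positivePart e) (h : commBk A e a = 0) :
    a = 0 := by
  have hind := Module.End.eigenspaces_iSupIndep (commBk A e : Module.End ℚ A)
  refine Submodule.disjoint_def.1 (hind 0) a ?_ ?_
  · rw [Module.End.mem_eigenspace_iff, h, zero_smul]
  · refine (Submodule.span_le.2 ?_) ha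
    rintro b ⟨m, hm⟩
    have hm0 : ((m : ℚ) + 1) ≠ 0 := by positivity
    exact Submodule.mem_iSup_of_mem _ (Submodule.mem_iSup_of_mem hm0
      (Module.End.mem_eigenspace_iff.2 hm))

theorem commBk_pow_of_eigen (hx : commBk A e x = x) (p : ℕ) :
    commBk A e (x ^ p) = (p : ℚ) • x ^ p := by
  induction p with
  | zero => simp
  | succ p ih =>
    rw [pow_succ, commBk_mul_of_eigen ih (by rw [hx, one_smul])]
    push_cast
    rfl

theorem blockSum_mem_positivePart (hx : commBk A e x = x) (hy : commBk A e y = y) :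
    blockSum N x y ∈ positivePart e := by
  refine Submodule.sum_mem _ fun a _ => ?_
  by_cases ha : 0 < (a.1 : ℕ) + (a.2 : ℕ)
  · refine Submodule.smul_mem _ _ (Submodule.subset_span ⟨a.1 + a.2 - 1, ?_⟩)
    rw [commBk_mul_of_eigen (commBk_pow_of_eigen hx _) (commBk_pow_of_eigen hy _),
      Nat.cast_sub (by omega)]
    congr 1
    push_cast
    ring
  · simp [blockCoeff, ha]

theorem bch_mem_positivePart (hx : commBk A e x = x) (hy : commBk A e y = y) :
    bch (commBk A) N x y ∈ positivePart e := by
  refine Submodule.sum_mem _ fun n _ => Submodule.sum_mem _ fun f _ => ?_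
  set ps := List.ofFn fun i => (((f i).1 : ℕ), ((f i).2 : ℕ)) with hps
  by_cases h : (ps.map fun pq => pq.1 + pq.2).sum = 0
  · have : dynkinCoeff ps = 0 := by simp [dynkinCoeff, h]
    rw [this, zero_smul]
    exact Submodule.zero_mem _
  · refine Submodule.smul_mem _ _ (Submodule.subset_span
      ⟨(ps.map fun pq => pq.1 + pq.2).sum - 1, ?_⟩)
    rw [commBk_dynkinTermBk hx hy, Nat.cast_sub (by omega)]
    simp

theorem commBk_bch (hx : commBk A e x = x) (hy : commBk A e y = y) (hN : 0 < N) :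
    commBk A e (bch (commBk A) N x y) =
      ∑ n ∈ Finset.range N, ((-1 : ℚ) ^ n / (n + 1)) •
        (blockSum N (commBk A x : Module.End ℚ A) (commBk A y) ^ n)
          (x + ∑ p ∈ Finset.range (N + 1),
            (p ! : ℚ)⁻¹ • ((commBk A x : Module.End ℚ A) ^ p) y) := by
  rw [bch, map_sum]
  refine Finset.sum_congr rfl fun n _ => ?_
  rw [← sum_blockCoeff_smul_wordBk (commBk A) (by simp) hN, blockSum_pow_apply, map_sum,
    Finset.smul_sum]
  refine Finset.sum_congr rfl fun f _ => ?_
  set ps := List.ofFn fun i => (((f i).1 : ℕ), ((f i).2 : ℕ)) with hps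
  have hlen : ps.length = n + 1 := by simp [hps]
  have hne : ps ≠ [] := by
    intro h
    simp [h] at hlen
  rw [map_smul, commBk_dynkinTermBk hx hy, smul_smul, smul_smul, dynkinCoeff_mul_sum hne, hlen]
  simp

/-- Dynkin's form of the Baker-Campbell-Hausdorff formula, for elements of an associative algebra
all of whose words of length `N` vanish and which have weight one for the bracket with some
element `e`. -/
theorem logSum_exp_mul_exp (hx : commBk A e x = x) (hy : commBk A e y = y) (hN : 0 < N)
    (hnil : ∀ l : List A, (∀ c ∈ l, c ∈ ({x, y} : Set A)) → N ≤ l.length → l.prod = 0) :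
    logSum N (IsNilpotent.exp x * IsNilpotent.exp y - 1) = bch (commBk A) N x y := by
  have hxN : x ^ N = 0 := by
    simpa using hnil (List.replicate N x) (fun c hc => by simp [List.eq_of_mem_replicate hc])
      (by simp)
  have hyN : y ^ N = 0 := by
    simpa using hnil (List.replicate N y) (fun c hc => by simp [List.eq_of_mem_replicate hc])
      (by simp)
  have hxn : IsNilpotent x := ⟨N, hxN⟩
  have hyn : IsNilpotent y := ⟨N, hyN⟩
  have hu : IsNilpotent.exp x * IsNilpotent.exp y - 1 = blockSum N x y :=
    exp_mul_exp_sub_one hxN hyN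
  have huN : (IsNilpotent.exp x * IsNilpotent.exp y - 1) ^ N = 0 := by
    rw [hu, blockSum_pow_eq_zero hnil]
  obtain ⟨M, hM⟩ := commBk_logSum_exp_mul_exp hxn hyn huN
  set z := logSum N (IsNilpotent.exp x * IsNilpotent.exp y - 1) with hz
  set G := IsNilpotent.exp (commBk A x : Module.End ℚ A) *
    IsNilpotent.exp (commBk A y : Module.End ℚ A) - 1
  set w := x + ∑ p ∈ Finset.range (N + 1), (p ! : ℚ)⁻¹ • ((commBk A x : Module.End ℚ A) ^ p) y
    with hw
  have h0 : (1 : A) ∈ wordFiltration {x, y} N 0 := one_mem_wordFiltration hnil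
  have hx1 : x ∈ wordFiltration {x, y} N 1 := by
    simpa using mul_mem_wordFiltration (c := x) (by simp) h0
  have hy1 : y ∈ wordFiltration {x, y} N 1 := by
    simpa using mul_mem_wordFiltration (c := y) (by simp) h0
  have hw1 : w ∈ wordFiltration {x, y} N 1 := by
    refine Submodule.add_mem _ hx1 (Submodule.sum_mem _ fun p _ => Submodule.smul_mem _ _ ?_)
    exact wordFiltration_anti (by omega) (pow_apply_mem_wordFiltration
      (fun k a ha => commBk_mem_wordFiltration (by simp) ha) p hy1)
  have hexp : ∀ c : A, IsNilpotent c → commBk A e c = c →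
      IsNilpotent.exp (commBk A c : Module.End ℚ A) e = e - c := by
    intro c hc hec
    have h1 : commBk A c e = -c := by
      rw [show commBk A c e = -commBk A e c by simp, hec]
    rw [show IsNilpotent.exp (commBk A c : Module.End ℚ A) e =
      IsNilpotent.exp (commBk A c : Module.End ℚ A) • e from rfl,
      IsNilpotent.exp_smul_eq_sum (k := 2) _ (isNilpotent_commBk hc)]
    · simp [Finset.sum_range_succ, -commBk_apply, h1, sub_eq_add_neg]
    · simp [pow_two, -commBk_apply, h1]
      simp
  have hGe : G e = -w := by
    simp only [G, LinearMap.sub_apply, Module.End.mul_apply, Module.End.one_apply]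
    rw [hexp y hyn hy, map_sub, hexp x hxn hx,
      exp_commBk_of_mem_wordFiltration (by simp) hxn hy1, hw]
    abel
  have hez : commBk A e z = commBk A e (bch (commBk A) N x y) := by
    have h1 : commBk A e z = -(commBk A z e) := by simp
    have h2 : commBk A z e = -∑ n ∈ Finset.range (N + M), ((-1 : ℚ) ^ n / (n + 1)) •
        (blockSum N (commBk A x : Module.End ℚ A) (commBk A y) ^ n) w := by
      rw [hM (N + M) (by omega), logSum, LinearMap.sum_apply, ← Finset.sum_neg_distrib]
      refine Finset.sum_congr rfl fun n _ => ?_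
      rw [LinearMap.smul_apply, pow_succ, Module.End.mul_apply, hGe, map_neg, smul_neg,
        exp_commBk_mul_exp_commBk_sub_one_pow hxn hyn hw1]
    rw [h1, h2, neg_neg, commBk_bch hx hy hN]
    refine (Finset.sum_subset (Finset.range_mono (by omega)) fun n _ hn => ?_).symm
    rw [eq_zero_of_mem_wordFiltration _ (pow_apply_mem_wordFiltration
      (fun _ _ h => blockSum_commBk_apply_mem h) n hw1), smul_zero]
    simp only [Finset.mem_range] at hn
    omega
  refine sub_eq_zero.1 (eq_zero_of_mem_positivePart (e := e) (Submodule.sub_mem _ ?_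
    (bch_mem_positivePart hx hy)) (by rw [map_sub, hez, sub_self]))
  rw [hz, hu]
  exact Submodule.sum_mem _ fun n _ => Submodule.smul_mem _ _
    (pow_succ_mem_positivePart (blockSum_mem_positivePart hx hy) n)

theorem isNilpotent_bch_and_exp_bch (hx : commBk A e x = x) (hy : commBk A e y = y) (hN : 0 < N)
    (hnil : ∀ l : List A, (∀ c ∈ l, c ∈ ({x, y} : Set A)) → N ≤ l.length → l.prod = 0) :
    IsNilpotent (bch (commBk A) N x y) ∧
      IsNilpotent.exp (bch (commBk A) N x y) = IsNilpotent.exp x * IsNilpotent.exp y := by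
  have huN : (IsNilpotent.exp x * IsNilpotent.exp y - 1) ^ N = 0 := by
    rw [exp_mul_exp_sub_one, blockSum_pow_eq_zero hnil]
    · simpa using hnil (List.replicate N x) (fun c hc => by simp [List.eq_of_mem_replicate hc])
        (by simp)
    · simpa using hnil (List.replicate N y) (fun c hc => by simp [List.eq_of_mem_replicate hc])
        (by simp)
  rw [← logSum_exp_mul_exp hx hy hN hnil]
  refine ⟨isNilpotent_logSum ⟨N, huN⟩ N, ?_⟩
  rw [exp_logSum huN]
  abel

end BCH

section Shift

variable {V : Type*} [AddCommGroup V] [Module ℚ V]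

/-- The endomorphism `T` composed with the translation of sequences by one step. -/
def shiftEnd (T : Module.End ℚ V) : Module.End ℚ (ℤ → V) :=
  LinearMap.pi fun i => T ∘ₗ LinearMap.proj (i - 1)

/-- The endomorphism of sequences multiplying the entry at `i` by `i`. -/
def weightEnd (V : Type*) [AddCommGroup V] [Module ℚ V] : Module.End ℚ (ℤ → V) :=
  LinearMap.pi fun i => (i : ℚ) • LinearMap.proj i

/-- The constant sequences. -/
def constSeq (V : Type*) [AddCommGroup V] [Module ℚ V] : V →ₗ[ℚ] (ℤ → V) :=
  LinearMap.pi fun _ => LinearMap.id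

theorem commBk_weightEnd_shiftEnd (T : Module.End ℚ V) :
    commBk (Module.End ℚ (ℤ → V)) (weightEnd V) (shiftEnd T) = shiftEnd T := by
  ext f i
  simp [weightEnd, shiftEnd, sub_smul]

theorem prod_map_shiftEnd_apply (l : List (Module.End ℚ V)) (f : ℤ → V) (i : ℤ) :
    (l.map shiftEnd).prod f i = l.prod (f (i - l.length)) := by
  induction l generalizing i with
  | nil => simp
  | cons T l ih =>
    rw [List.map_cons, List.prod_cons, Module.End.mul_apply, List.prod_cons, Module.End.mul_apply]
    simp [shiftEnd, ih, sub_sub, add_comm]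

theorem constSeq_injective : Function.Injective (constSeq V) :=
  fun _ _ h => congrFun h 0

theorem exp_constSeq {T : Module.End ℚ (ℤ → V)} {U : Module.End ℚ V} (hT : IsNilpotent T)
    (hU : IsNilpotent U) (h : T ∘ₗ constSeq V = constSeq V ∘ₗ U) (v : V) :
    IsNilpotent.exp T (constSeq V v) = constSeq V (IsNilpotent.exp U v) :=
  LinearMap.congr_fun (Module.End.commute_exp_left_of_commute hU hT h) v

end Shift

section Gauge

variable {L : Type*} [AddCommGroup L] [Module ℚ L] {deg : ℤ → Submodule ℚ L}
  {bk : L →ₗ[ℚ] L →ₗ[ℚ] L} {d : L →ₗ[ℚ] L} {N : ℕ}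

/-- The linear action `x ↦ ((z, c) ↦ ([x, z] - c • d x, 0))` on `L × ℚ`, whose exponential
restricts to the gauge action on the affine hyperplane `c = 1`. -/
def affineAct (bk : L →ₗ[ℚ] L →ₗ[ℚ] L) (d : L →ₗ[ℚ] L) : L →ₗ[ℚ] Module.End ℚ (L × ℚ) :=
  LinearMap.mk₂ ℚ (fun x v => (bk x v.1 - v.2 • d x, 0))
    (fun x y v => by ext <;> simp; abel)
    (fun c x v => by ext <;> simp [smul_sub, smul_comm c])
    (fun x v w => by ext <;> simp [add_smul]; abel)
    (fun c x v => by ext <;> simp [smul_sub, mul_smul])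

@[simp]
theorem affineAct_apply (x : L) (v : L × ℚ) :
    affineAct bk d x v = (bk x v.1 - v.2 • d x, 0) := rfl

theorem IsDGLA.affineAct_bk (h : IsDGLA deg bk d) {x y : L} (hx : x ∈ deg 0) (hy : y ∈ deg 0) :
    affineAct bk d (bk x y) =
      commBk (Module.End ℚ (L × ℚ)) (affineAct bk d x) (affineAct bk d y) := by
  refine LinearMap.ext fun v => Prod.ext ?_ ?_
  · have h1 := h.jacobi 0 0 x y v.1 hx hy
    have h2 := h.leibniz 0 x y hx
    have h3 := h.antisymm 0 (0 - 1) y (d x) hy (h.d_deg 0 x hx)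
    simp only [zero_mul, zpow_zero, one_smul] at h1 h2 h3
    simp [h1, h2, h3, smul_add]
    abel
  · simp

theorem IsDGLA.wordBk_mem (h : IsDGLA deg bk d) {l : List L} (hl : ∀ a ∈ l, a ∈ deg 0) :
    wordBk bk l ∈ deg 0 := by
  induction l with
  | nil => exact Submodule.zero_mem _
  | cons a l ih =>
    rcases eq_or_ne l [] with rfl | hne
    · exact hl a (by simp)
    · rw [wordBk_cons bk hne]
      exact h.bk_deg 0 0 _ _ (hl a (by simp)) (ih fun b hb => hl b (by simp [hb]))

theorem prod_map_affineAct_apply (l : List L) (z : L) :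
    (l.map (affineAct bk d)).prod (z, 0) = (wordBk bk (l ++ [z]), 0) := by
  induction l with
  | nil => rfl
  | cons a l ih =>
    rw [List.map_cons, List.prod_cons, Module.End.mul_apply, ih, List.cons_append,
      wordBk_cons bk (by simp)]
    simp

theorem prod_map_affineAct_eq_zero (hN : 0 < N)
    (hnil : ∀ l : List L, N ≤ l.length → wordBk bk l = 0) {l : List L} (hl : N ≤ l.length) :
    (l.map (affineAct bk d)).prod = 0 := by
  have hne : l ≠ [] := by
    rintro rfl
    simp at hl
    omega
  rw [← List.dropLast_append_getLast hne, List.map_append, List.prod_append]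
  refine LinearMap.ext fun v => ?_
  rw [Module.End.mul_apply]
  simp only [List.map_cons, List.map_nil, List.prod_singleton, affineAct_apply]
  rw [prod_map_affineAct_apply, hnil _ (by simp; omega)]
  simp

theorem affineAct_pow_eq_zero (hN : 0 < N)
    (hnil : ∀ l : List L, N ≤ l.length → wordBk bk l = 0) (x : L) :
    affineAct bk d x ^ N = 0 := by
  simpa using prod_map_affineAct_eq_zero (d := d) hN hnil (l := List.replicate N x) (by simp)

theorem adp_succ (x : L) (n : ℕ) (z : L) : adp bk x (n + 1) z = bk x (adp bk x n z) :=
  Function.iterate_succ_apply' _ _ _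

theorem adp_eq_wordBk (x : L) (n : ℕ) (z : L) :
    adp bk x n z = wordBk bk (List.replicate n x ++ [z]) := by
  induction n with
  | zero => rfl
  | succ n ih =>
    rw [adp_succ, ih, List.replicate_succ, List.cons_append, wordBk_cons bk (by simp)]

theorem affineAct_pow_succ_apply (x z : L) (n : ℕ) :
    (affineAct bk d x ^ (n + 1)) (z, 1) = (adp bk x (n + 1) z - adp bk x n (d x), 0) := by
  induction n with
  | zero => simp [adp]
  | succ n ih =>
    rw [pow_succ', Module.End.mul_apply, ih]
    simp [adp_succ]

theorem exp_affineAct_apply (hN : 0 < N)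
    (hnil : ∀ l : List L, N ≤ l.length → wordBk bk l = 0) (x z : L) :
    IsNilpotent.exp (affineAct bk d x) (z, 1) = (gauge bk d N x z, 1) := by
  have hz : adp bk x N z = 0 := by
    rw [adp_eq_wordBk]
    exact hnil _ (by simp)
  have hsum : ∑ n ∈ Finset.range N, ((n.factorial : ℚ)⁻¹) • adp bk x n z =
      ∑ n ∈ Finset.range N, (((n + 1).factorial : ℚ)⁻¹) • adp bk x (n + 1) z + z := by
    have h := Finset.sum_range_succ (fun n => ((n.factorial : ℚ)⁻¹) • adp bk x n z) N
    rw [hz, smul_zero, add_zero, Finset.sum_range_succ'] at h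
    simpa [adp] using h.symm
  rw [IsNilpotent.exp_eq_sum
    (pow_eq_zero_of_le N.le_succ (affineAct_pow_eq_zero hN hnil x)), Finset.sum_range_succ',
    LinearMap.add_apply, LinearMap.sum_apply, gauge, hsum]
  simp only [LinearMap.smul_apply, affineAct_pow_succ_apply]
  ext
  · simp [Prod.fst_sum, smul_sub]
    abel
  · simp [Prod.snd_sum]

theorem IsDGLA.wordBk_shiftEnd_comp_constSeq (h : IsDGLA deg bk d) {l : List L}
    (hl : ∀ a ∈ l, a ∈ deg 0) :
    wordBk (commBk (Module.End ℚ (ℤ → L × ℚ))) (l.map fun a => shiftEnd (affineAct bk d a)) ∘ₗ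
        constSeq (L × ℚ) = constSeq (L × ℚ) ∘ₗ affineAct bk d (wordBk bk l) := by
  induction l with
  | nil => simp [wordBk]
  | cons a l ih =>
    rcases eq_or_ne l [] with rfl | hne
    · rfl
    · have hl' : ∀ b ∈ l, b ∈ deg 0 := fun b hb => hl b (by simp [hb])
      have ha : shiftEnd (affineAct bk d a) ∘ₗ constSeq (L × ℚ) =
        constSeq (L × ℚ) ∘ₗ affineAct bk d a := rfl
      rw [List.map_cons, wordBk_cons _ (by simpa using hne), wordBk_cons bk hne,
        h.affineAct_bk (hl a (by simp)) (h.wordBk_mem hl'), commBk_apply, commBk_apply,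
        LinearMap.sub_comp, LinearMap.comp_sub, Module.End.mul_eq_comp, Module.End.mul_eq_comp,
        Module.End.mul_eq_comp, Module.End.mul_eq_comp, LinearMap.comp_assoc,
        LinearMap.comp_assoc, ih hl', ha, ← LinearMap.comp_assoc, ← LinearMap.comp_assoc, ha,
        ih hl', LinearMap.comp_assoc, LinearMap.comp_assoc]

theorem IsDGLA.bch_shiftEnd_comp_constSeq (h : IsDGLA deg bk d) {x y : L} (hx : x ∈ deg 0)
    (hy : y ∈ deg 0) :
    bch (commBk (Module.End ℚ (ℤ → L × ℚ))) N (shiftEnd (affineAct bk d x))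
        (shiftEnd (affineAct bk d y)) ∘ₗ constSeq (L × ℚ) =
      constSeq (L × ℚ) ∘ₗ affineAct bk d (bch bk N x y) := by
  have hterm (ps : List (ℕ × ℕ)) :
      dynkinTermBk (commBk (Module.End ℚ (ℤ → L × ℚ))) (shiftEnd (affineAct bk d x))
        (shiftEnd (affineAct bk d y)) ps ∘ₗ constSeq (L × ℚ) =
      constSeq (L × ℚ) ∘ₗ affineAct bk d (dynkinTermBk bk x y ps) := by
    rw [dynkinTermBk, dynkinTermBk, ← h.wordBk_shiftEnd_comp_constSeq]
    · simp [List.map_flatten, Function.comp_def]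
    · intro a ha
      simp only [List.mem_flatten, List.mem_map] at ha
      obtain ⟨_, ⟨pq, -, rfl⟩, ha⟩ := ha
      rcases List.mem_append.1 ha with h | h
      · rwa [List.eq_of_mem_replicate h]
      · rwa [List.eq_of_mem_replicate h]
  refine LinearMap.ext fun v => ?_
  have hterm_apply (ps : List (ℕ × ℕ)) := LinearMap.congr_fun (hterm ps) v
  simp only [LinearMap.comp_apply] at hterm_apply ⊢
  simp only [bch, map_sum, map_smul, LinearMap.sum_apply, LinearMap.smul_apply, hterm_apply]

theorem IsDGLA.exp_affineAct_bch (h : IsDGLA deg bk d) (hN : 0 < N)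
    (hnil : ∀ l : List L, N ≤ l.length → wordBk bk l = 0) {x y : L} (hx : x ∈ deg 0)
    (hy : y ∈ deg 0) (v : L × ℚ) :
    IsNilpotent.exp (affineAct bk d (bch bk N x y)) v =
      IsNilpotent.exp (affineAct bk d x) (IsNilpotent.exp (affineAct bk d y) v) := by
  set X := shiftEnd (affineAct bk d x) with hX
  set Y := shiftEnd (affineAct bk d y) with hY
  have hword : ∀ l : List L, N ≤ l.length →
      (l.map fun a => shiftEnd (affineAct bk d a)).prod = 0 := by
    intro l hl
    have h1 : (l.map fun a => shiftEnd (affineAct bk d a)) =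
        (l.map (affineAct bk d)).map shiftEnd := by simp
    refine LinearMap.ext fun f => funext fun i => ?_
    rw [h1, prod_map_shiftEnd_apply, prod_map_affineAct_eq_zero hN hnil hl]
    simp
  have hnilA : ∀ l : List (Module.End ℚ (ℤ → L × ℚ)),
      (∀ c ∈ l, c ∈ ({X, Y} : Set (Module.End ℚ (ℤ → L × ℚ)))) → N ≤ l.length → l.prod = 0 := by
    intro l hl hlen
    have hr : ∀ c ∈ l, c ∈ Set.range fun a => shiftEnd (affineAct bk d a) := by
      intro c hc
      rcases hl c hc with rfl | rfl
      exacts [⟨x, rfl⟩, ⟨y, rfl⟩]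
    obtain ⟨m, rfl⟩ : l ∈ Set.range (List.map fun a => shiftEnd (affineAct bk d a)) := by
      rw [Set.range_list_map]
      exact hr
    exact hword m (by simpa using hlen)
  have hpow (a : L) : IsNilpotent (shiftEnd (affineAct bk d a)) :=
    ⟨N, by simpa using hword (List.replicate N a) (by simp)⟩
  have hnilp (a : L) : IsNilpotent (affineAct bk d a) := ⟨N, affineAct_pow_eq_zero hN hnil a⟩
  obtain ⟨hB, hexp⟩ := isNilpotent_bch_and_exp_bch (commBk_weightEnd_shiftEnd (affineAct bk d x))
    (commBk_weightEnd_shiftEnd (affineAct bk d y)) hN hnilA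
  apply constSeq_injective
  rw [← exp_constSeq hB (hnilp _) (h.bch_shiftEnd_comp_constSeq hx hy), hexp,
    Module.End.mul_apply, exp_constSeq (hpow y) (hnilp y) rfl, exp_constSeq (hpow x) (hnilp x) rfl]

end Gauge

/-- In a nilpotent differential graded Lie algebra `L`, the gauge action of
`(L₀, *)` (with the Baker-Campbell-Hausdorff product `*`) on `MC(L)` is a group
action: `0 ∙ z = z` and `x ∙ (y ∙ z) = (x * y) ∙ z`. -/
theorem gauge_is_group_action
    {L : Type*} [AddCommGroup L] [Module ℚ L]
    (deg : ℤ → Submodule ℚ L) (bk : L →ₗ[ℚ] L →ₗ[ℚ] L) (d : L →ₗ[ℚ] L)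
    (h : IsDGLA deg bk d)
    (N : ℕ) (hnil : ∀ l : List L, N ≤ l.length → wordBk bk l = 0)
    (x y : L) (hx : x ∈ deg 0) (hy : y ∈ deg 0)
    (z : L) (hz : IsMC deg bk d z) :
    gauge bk d N 0 z = z ∧
      gauge bk d N x (gauge bk d N y z) = gauge bk d N (bch bk N x y) z := by
  rcases Nat.eq_zero_or_pos N with rfl | hN
  · have h0 (a : L) : a = 0 := hnil [a] (Nat.zero_le _)
    exact ⟨(h0 _).trans (h0 _).symm, (h0 _).trans (h0 _).symm⟩
  have key := exp_affineAct_apply (d := d) hN hnil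
  constructor
  · simpa using (congrArg Prod.fst (key 0 z)).symm
  · have hb := h.exp_affineAct_bch hN hnil hx hy (z, 1)
    rw [key, key, key] at hb
    exact (congrArg Prod.fst hb).symm

end Paper
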